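/- Let F₃ be the free group on x₁, x₂, x₃ and let φ be the automorphism induced by the Artin action of the braid σ₁² σ₂⁻¹ ∈ B₃: φ(x₁) = x₁x₃x₁x₃⁻¹x₁⁻¹, φ(x₂) = x₁x₃x₁⁻¹, φ(x₃) = x₃⁻¹x₂x₃. Then there exists a bi-ordering of F₃ invariant under φ. -/

import Mathlib

open FreeGroup

/-- The automorphism of `F₃ = ⟨x₁,x₂,x₃⟩` induced by the Artin action of the braid
`σ₁² σ₂⁻¹ ∈ B₃` (generators indexed by `Fin 3`, so `x₁ = of 0`, `x₂ = of 1`, `x₃ = of 2`):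
`φ(x₁) = x₁x₃x₁x₃⁻¹x₁⁻¹`, `φ(x₂) = x₁x₃x₁⁻¹`, `φ(x₃) = x₃⁻¹x₂x₃`. -/
def phiMagic : FreeGroup (Fin 3) →* FreeGroup (Fin 3) :=
  FreeGroup.lift fun k =>
    if k = 0 then of 0 * of 2 * of 0 * (of 2)⁻¹ * (of 0)⁻¹
    else if k = 1 then of 0 * of 2 * (of 0)⁻¹
    else (of 2)⁻¹ * of 1 * of 2

/-!
The algebra `R⟨Xᵢ⟩ / (Xᵢ²)` contains a copy of the free group via `xᵢ ↦ 1 + Xᵢ`, and the sign of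
the first nonzero coefficient of `g - 1` orders that group. An endomorphism sending each `xᵢ` to a
conjugate of `x_{s i}` changes the lowest-degree part of `g - 1` only by the relabelling `s`, so it
preserves the ordering whenever `s` is increasing.

`φ` exchanges `x₂` and `x₃` up to conjugacy, so this does not apply to `F₃` itself. But `φ`
preserves the exponent sum of `x₁`, and the kernel of that map is free on the elements
`x₁⁻ᵏ xⱼ x₁ᵏ`, with `k : ℤ` and `j = 2, 3`. On the conjugacy classes of these generators `φ` acts by
`(k, 2) ↦ (k - 1, 3)` and `(k, 3) ↦ (k, 2)`, the predecessor map of the lexicographic order, while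
conjugation by `x₁` translates `k`. Hence the ordering of the kernel is preserved by `φ` and by
conjugation in `F₃`, and together with the order of `ℤ` it gives an invariant ordering of `F₃`.
-/

/-- The positive cone `{g | 1 < g}` of a bi-ordering of a group. -/
structure IsPositiveCone {G : Type*} [Group G] (P : Set G) : Prop where
  one_notMem : 1 ∉ P
  mul_mem {a b : G} : a ∈ P → b ∈ P → a * b ∈ P
  conj_mem {a : G} (g : G) : a ∈ P → g * a * g⁻¹ ∈ P
  mem_or_inv_mem {a : G} : a ≠ 1 → a ∈ P ∨ a⁻¹ ∈ P

namespace IsPositiveCone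

variable {G N Q : Type*} [Group G] [Group N] [Group Q]

theorem setOf_one_lt {A : Type*} [CommGroup A] [LinearOrder A] [IsOrderedMonoid A] :
    IsPositiveCone {a : A | 1 < a} where
  one_notMem := lt_irrefl 1
  mul_mem := one_lt_mul''
  conj_mem g ha := by simpa [mul_comm g] using ha
  mem_or_inv_mem ha := (ne_iff_lt_or_gt.1 ha).symm.imp_right one_lt_inv'.2

variable {P : Set G}

theorem inv_notMem (hP : IsPositiveCone P) {a : G} (ha : a ∈ P) : a⁻¹ ∉ P := fun ha' =>
  hP.one_notMem (mul_inv_cancel a ▸ hP.mul_mem ha ha')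

theorem map_mem_iff (hP : IsPositiveCone P) {φ : G →* G} (hφ : Set.MapsTo φ P P) {a : G} :
    φ a ∈ P ↔ a ∈ P := by
  refine ⟨fun h => ?_, fun h => hφ h⟩
  have ha : a ≠ 1 := by
    rintro rfl
    exact hP.one_notMem (by simpa using h)
  refine (hP.mem_or_inv_mem ha).resolve_right fun ha' => hP.inv_notMem h ?_
  simpa using hφ ha'

theorem exists_invariant_biOrder (hP : IsPositiveCone P) {φ : G →* G}
    (hφ : Set.MapsTo φ P P) :
    ∃ lt : G → G → Prop,
      (∀ a, ¬ lt a a) ∧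
      (∀ a b c, lt a b → lt b c → lt a c) ∧
      (∀ a b, a ≠ b → lt a b ∨ lt b a) ∧
      (∀ a b c, lt a b → lt (c * a) (c * b)) ∧
      (∀ a b c, lt a b → lt (a * c) (b * c)) ∧
      (∀ a b, lt a b ↔ lt (φ a) (φ b)) := by
  refine ⟨fun a b => a⁻¹ * b ∈ P, fun a => ?_, fun a b c hab hbc => ?_, fun a b hab => ?_,
    fun a b c hab => ?_, fun a b c hab => ?_, fun a b => ?_⟩
  · simpa using hP.one_notMem
  · simpa [mul_assoc] using hP.mul_mem hab hbc
  · simpa using hP.mem_or_inv_mem (mt inv_mul_eq_one.1 hab)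
  · simpa [mul_assoc] using hab
  · simpa [mul_assoc] using hP.conj_mem c⁻¹ hab
  · simpa using (hP.map_mem_iff hφ (a := a⁻¹ * b)).symm

theorem extension {PN : Set N} {PQ : Set Q} (hN : IsPositiveCone PN) (hQ : IsPositiveCone PQ)
    {ι : N →* G} {π : G →* Q} (hι : Function.Injective ι) (hπ : ι.range = π.ker)
    (hconj : ∀ g, ∀ n ∈ PN, g * ι n * g⁻¹ ∈ ι '' PN) :
    IsPositiveCone (π ⁻¹' PQ ∪ ι '' PN) := by
  have hπι (n : N) : π (ι n) = 1 := MonoidHom.mem_ker.1 (hπ ▸ ⟨n, rfl⟩)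
  constructor
  · rintro (h | ⟨n, hn, h⟩)
    · exact hQ.one_notMem (by simpa using h)
    · rw [← _root_.map_one ι, hι.eq_iff] at h
      exact hN.one_notMem (h ▸ hn)
  · rintro a b (ha | ⟨m, hm, rfl⟩) (hb | ⟨n, hn, rfl⟩)
    · exact .inl (by simpa using hQ.mul_mem ha hb)
    · exact .inl (by simpa [hπι] using ha)
    · exact .inl (by simpa [hπι] using hb)
    · exact .inr ⟨m * n, hN.mul_mem hm hn, _root_.map_mul ι m n⟩
  · rintro a g (ha | ⟨n, hn, rfl⟩)
    · exact .inl (by simpa using hQ.conj_mem (π g) ha)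
    · exact .inr (hconj g n hn)
  · intro a ha
    by_cases h : π a = 1
    · obtain ⟨n, rfl⟩ : a ∈ ι.range := hπ ▸ h
      have hn : n ≠ 1 := by
        rintro rfl
        exact ha (_root_.map_one ι)
      exact (hN.mem_or_inv_mem hn).imp (fun h => .inr ⟨n, h, rfl⟩)
        fun h => .inr ⟨n⁻¹, h, _root_.map_inv ι n⟩
    · exact (hQ.mem_or_inv_mem h).imp .inl fun h => .inl (by simpa using h)

end IsPositiveCone

/-- The relations `Xᵢ² = 0` on the free algebra. -/
inductive SquareZeroAlgebra.Rel (R : Type*) [CommRing R] (α : Type*) :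
    FreeAlgebra R α → FreeAlgebra R α → Prop
  | sq (i : α) : SquareZeroAlgebra.Rel R α (FreeAlgebra.ι R i * FreeAlgebra.ι R i) 0

/-- The algebra `R⟨Xᵢ : i ∈ α⟩ / (Xᵢ²)`. -/
def SquareZeroAlgebra (R : Type*) [CommRing R] (α : Type*) : Type _ :=
  RingQuot (SquareZeroAlgebra.Rel R α)

namespace SquareZeroAlgebra

variable (R : Type*) [CommRing R] (α : Type*)

instance : Ring (SquareZeroAlgebra R α) := inferInstanceAs (Ring (RingQuot _))

instance : Algebra R (SquareZeroAlgebra R α) := inferInstanceAs (Algebra R (RingQuot _))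

/-- The quotient map from the free algebra. -/
def mk : FreeAlgebra R α →ₐ[R] SquareZeroAlgebra R α := RingQuot.mkAlgHom R (Rel R α)

variable {α}

/-- The generator `Xᵢ`. -/
def X (i : α) : SquareZeroAlgebra R α := mk R α (FreeAlgebra.ι R i)

@[simp] theorem X_mul_X (i : α) : X R i * X R i = 0 := by
  have hsq : mk R α (FreeAlgebra.ι R i * FreeAlgebra.ι R i) = mk R α 0 :=
    RingQuot.mkAlgHom_rel R (Rel.sq i)
  simpa [X] using hsq

variable {R}

section Lift

variable {A : Type*} [Ring A] [Algebra R A] (f : α → A) (hf : ∀ i, f i * f i = 0)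

/-- The algebra homomorphism with `Xᵢ ↦ f i`. -/
def lift : SquareZeroAlgebra R α →ₐ[R] A :=
  RingQuot.liftAlgHom R ⟨FreeAlgebra.lift R f, by
    rintro _ _ ⟨i⟩
    simp [hf]⟩

@[simp] theorem lift_X (i : α) : lift f hf (X R i) = f i :=
  (RingQuot.liftAlgHom_mkAlgHom_apply ..).trans (FreeAlgebra.lift_ι_apply f i)

end Lift

@[elab_as_elim]
theorem induction {p : SquareZeroAlgebra R α → Prop} (algebraMap : ∀ r, p (algebraMap R _ r))
    (X : ∀ i, p (X R i)) (add : ∀ a b, p a → p b → p (a + b)) (mul : ∀ a b, p a → p b → p (a * b))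
    (a : SquareZeroAlgebra R α) : p a := by
  obtain ⟨a, rfl⟩ : ∃ c, mk R α c = a := RingQuot.mkAlgHom_surjective R _ a
  induction a using FreeAlgebra.induction with
  | grade0 r => simpa using algebraMap r
  | grade1 i => exact X i
  | mul a b ha hb => simpa using mul _ _ ha hb
  | add a b ha hb => simpa using add _ _ ha hb

variable (R) in
/-- The product `X_{i₁} ⋯ X_{iₙ}` for the word `i₁ ⋯ iₙ`; it is zero if two
adjacent letters agree. -/
def monomial : FreeMonoid α →* SquareZeroAlgebra R α := FreeMonoid.lift (X R)

@[simp] theorem monomial_of (i : α) : monomial R (.of i) = X R i := rfl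

variable (R) in
open scoped Classical in
/-- Left multiplication by `Xᵢ`, in terms of coefficients. -/
noncomputable def mulLeftX (i : α) : Module.End R (FreeMonoid α →₀ R) :=
  Finsupp.linearCombination R fun w =>
    if FreeMonoid.of i ∣ w then 0 else .single (.of i * w) 1

theorem mulLeftX_single_of_dvd {i : α} {w : FreeMonoid α} (h : .of i ∣ w) (r : R) :
    mulLeftX R i (.single w r) = 0 := by
  simp [mulLeftX, h]

theorem mulLeftX_single_of_not_dvd {i : α} {w : FreeMonoid α} (h : ¬ .of i ∣ w) (r : R) :
    mulLeftX R i (.single w r) = .single (.of i * w) r := by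
  simp [mulLeftX, h]

theorem mulLeftX_mul_mulLeftX (i : α) : mulLeftX R i * mulLeftX R i = 0 := by
  ext w : 2
  by_cases h : .of i ∣ w
  · simp [mulLeftX_single_of_dvd h]
  · simp [mulLeftX_single_of_not_dvd h, mulLeftX_single_of_dvd (dvd_mul_right _ _)]

theorem mulLeftX_apply_of_mul (i : α) (v : FreeMonoid α →₀ R) {w : FreeMonoid α}
    (h : ¬ .of i ∣ w) : mulLeftX R i v (.of i * w) = v w := by
  classical
  induction v using Finsupp.induction_linear with
  | zero => simp
  | add v v' hv hv' => simp [hv, hv']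
  | single u r =>
    by_cases hu : .of i ∣ u
    · have : u ≠ w := by
        rintro rfl
        exact h hu
      simp [mulLeftX_single_of_dvd hu, this]
    · simp [mulLeftX_single_of_not_dvd hu, Finsupp.single_apply]

theorem exists_of_mulLeftX_apply_ne_zero {i : α} {v : FreeMonoid α →₀ R} {u : FreeMonoid α}
    (h : mulLeftX R i v u ≠ 0) : ∃ w, u = .of i * w ∧ v w ≠ 0 := by
  contrapose! h
  rw [mulLeftX, Finsupp.linearCombination_apply, Finsupp.sum_apply]
  refine Finset.sum_eq_zero fun w hw => ?_
  have huw : .of i * w ≠ u := fun hu => Finsupp.mem_support_iff.1 hw (h w hu.symm)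
  by_cases hiw : .of i ∣ w <;> simp [hiw, huw]

variable (R α) in
/-- The action on `FreeMonoid α →₀ R` in which `Xᵢ` acts by `mulLeftX R i`. -/
noncomputable def toEnd : SquareZeroAlgebra R α →ₐ[R] Module.End R (FreeMonoid α →₀ R) :=
  lift (mulLeftX R) mulLeftX_mul_mulLeftX

variable (R α) in
/-- The coefficients with respect to the basis of monomials of words without equal adjacent
letters; the coefficients at all other words are zero. -/
noncomputable def coeffs : SquareZeroAlgebra R α →ₗ[R] FreeMonoid α →₀ R :=
  LinearMap.applyₗ (.single 1 1) ∘ₗ (toEnd R α).toLinearMap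

@[simp] theorem coeffs_one : coeffs R α 1 = .single 1 1 := by simp [coeffs]

@[simp] theorem coeffs_X_mul (i : α) (a : SquareZeroAlgebra R α) :
    coeffs R α (X R i * a) = mulLeftX R i (coeffs R α a) := by
  simp [coeffs, toEnd]

theorem linearCombination_toEnd (a : SquareZeroAlgebra R α) (v : FreeMonoid α →₀ R) :
    Finsupp.linearCombination R (monomial R) (toEnd R α a v) =
      a * Finsupp.linearCombination R (monomial R) v := by
  induction a using induction generalizing v with
  | algebraMap r => simp [Algebra.smul_def, Module.algebraMap_end_apply]
  | add a b ha hb => simp [ha, hb, add_mul]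
  | mul a b ha hb => simp [ha, hb, mul_assoc]
  | X i =>
    induction v using Finsupp.induction_linear with
    | zero => simp
    | add v w hv hw => simp only [map_add, hv, hw, mul_add]
    | single w r =>
      by_cases h : .of i ∣ w
      · obtain ⟨w, rfl⟩ := h
        simp [toEnd, mulLeftX_single_of_dvd (dvd_mul_right _ _), ← mul_assoc]
      · simp [toEnd, mulLeftX_single_of_not_dvd h]

theorem linearCombination_coeffs (a : SquareZeroAlgebra R α) :
    Finsupp.linearCombination R (monomial R) (coeffs R α a) = a := by
  simpa [coeffs] using linearCombination_toEnd a (.single 1 1)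

theorem coeffs_monomial (w : FreeMonoid α) :
    coeffs R α (monomial R w) = 0 ∨ coeffs R α (monomial R w) = .single w 1 := by
  induction w using FreeMonoid.inductionOn' with
  | one => simp
  | of_mul i w ih =>
    rcases ih with ih | ih
    · simp [ih]
    · by_cases h : .of i ∣ w
      · simp [ih, mulLeftX_single_of_dvd h]
      · simp [ih, mulLeftX_single_of_not_dvd h]

section Filtration

variable (R α) in
/-- The span of the monomials of degree at least `n`. -/
def filtration (n : ℕ) : Submodule R (SquareZeroAlgebra R α) :=
  Submodule.span R (monomial R '' {w | n ≤ w.length})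

theorem monomial_mem_filtration {n : ℕ} {w : FreeMonoid α} (h : n ≤ w.length) :
    monomial R w ∈ filtration R α n := Submodule.subset_span ⟨w, h, rfl⟩

theorem mul_mem_filtration {m n : ℕ} {a b : SquareZeroAlgebra R α} (ha : a ∈ filtration R α m)
    (hb : b ∈ filtration R α n) : a * b ∈ filtration R α (m + n) := by
  have hle : filtration R α m * filtration R α n ≤ filtration R α (m + n) := by
    rw [filtration, filtration, Submodule.span_mul_span, Submodule.span_le]
    rintro _ ⟨_, ⟨v, hv, rfl⟩, _, ⟨w, hw, rfl⟩, rfl⟩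
    simp only [← _root_.map_mul]
    exact monomial_mem_filtration (by simpa using add_le_add hv hw)
  exact hle (Submodule.mul_mem_mul ha hb)

theorem mem_filtration_iff {n : ℕ} {b : SquareZeroAlgebra R α} :
    b ∈ filtration R α n ↔ ∀ w, w.length < n → coeffs R α b w = 0 := by
  classical
  refine ⟨fun hb w hw => ?_, fun h => ?_⟩
  · induction hb using Submodule.span_induction with
    | zero => simp
    | add a b _ _ ha hb => simp [ha, hb]
    | smul r a _ ha => simp [ha]
    | mem a ha =>
      obtain ⟨u, hu, rfl⟩ := ha
      have huw : u ≠ w := by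
        rintro rfl
        exact hw.not_ge hu
      rcases coeffs_monomial (R := R) u with h | h <;> simp [h, huw]
  · rw [← linearCombination_coeffs b, Finsupp.linearCombination_apply]
    refine Submodule.sum_mem _ fun w hw => Submodule.smul_mem _ _ (monomial_mem_filtration ?_)
    contrapose! hw
    simpa using h w hw

theorem filtration_antitone : Antitone (filtration R α) := fun _ _ h =>
  Submodule.span_mono (Set.image_mono fun _ hw => h.trans hw)

theorem mem_filtration_zero (b : SquareZeroAlgebra R α) : b ∈ filtration R α 0 :=
  mem_filtration_iff.2 fun _ h => (Nat.not_lt_zero _ h).elim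

theorem X_mem_filtration_one (i : α) : X R i ∈ filtration R α 1 :=
  monomial_mem_filtration (w := .of i) le_rfl

end Filtration

section Map

@[simp] theorem length_freeMonoidMap {β : Type*} (s : α → β) (w : FreeMonoid α) :
    (FreeMonoid.map s w).length = w.length := List.length_map s

theorem freeMonoidMap_injective {β : Type*} {s : α → β} (hs : Function.Injective s) :
    Function.Injective (FreeMonoid.map s) := hs.list_map

variable {β : Type*} {s : α → β}

variable (R s) in
/-- The relabelling homomorphism `Xᵢ ↦ X_{s i}`. -/
def map : SquareZeroAlgebra R α →ₐ[R] SquareZeroAlgebra R β :=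
  lift (fun i => X R (s i)) fun _ => X_mul_X R _

@[simp] theorem map_X (i : α) : map R s (X R i) = X R (s i) := lift_X _ _ i

theorem map_monomial (w : FreeMonoid α) :
    map R s (monomial R w) = monomial R (FreeMonoid.map s w) := by
  induction w using FreeMonoid.inductionOn' with
  | one => simp
  | of_mul i w ih => simp [ih]

theorem of_dvd_map_iff (hs : Function.Injective s) {i : α} {w : FreeMonoid α} :
    FreeMonoid.of (s i) ∣ FreeMonoid.map s w ↔ FreeMonoid.of i ∣ w := by
  refine ⟨?_, ?_⟩
  · cases w using FreeMonoid.casesOn with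
    | one =>
      rintro ⟨c, hc⟩
      exact (List.cons_ne_nil _ _ hc.symm).elim
    | of_mul j w =>
      rintro ⟨c, hc⟩
      obtain rfl : j = i := hs (List.cons.inj hc).1
      exact dvd_mul_right _ _
  · rintro ⟨c, rfl⟩
    simp

theorem mulLeftX_mapDomain (hs : Function.Injective s) (i : α) (v : FreeMonoid α →₀ R) :
    mulLeftX R (s i) (v.mapDomain (FreeMonoid.map s)) =
      (mulLeftX R i v).mapDomain (FreeMonoid.map s) := by
  induction v using Finsupp.induction_linear with
  | zero => simp
  | add v v' hv hv' => simp [Finsupp.mapDomain_add, hv, hv']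
  | single w r =>
    by_cases h : .of i ∣ w
    · simp [mulLeftX_single_of_dvd h, mulLeftX_single_of_dvd ((of_dvd_map_iff hs).2 h)]
    · simp [mulLeftX_single_of_not_dvd h,
        mulLeftX_single_of_not_dvd (mt (of_dvd_map_iff hs).1 h)]

theorem toEnd_map_mapDomain (hs : Function.Injective s) (a : SquareZeroAlgebra R α)
    (v : FreeMonoid α →₀ R) :
    toEnd R β (map R s a) (v.mapDomain (FreeMonoid.map s)) =
      (toEnd R α a v).mapDomain (FreeMonoid.map s) := by
  induction a using induction generalizing v with
  | algebraMap r => simp [Module.algebraMap_end_apply, Finsupp.mapDomain_smul]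
  | X i => simpa [toEnd] using mulLeftX_mapDomain hs i v
  | add a b ha hb => simp [ha, hb, Finsupp.mapDomain_add]
  | mul a b ha hb => simp [ha, hb]

theorem coeffs_map (hs : Function.Injective s) (a : SquareZeroAlgebra R α) :
    coeffs R β (map R s a) = (coeffs R α a).mapDomain (FreeMonoid.map s) := by
  simpa [coeffs] using toEnd_map_mapDomain hs a (.single 1 1)

theorem mem_filtration_of_map_mem (hs : Function.Injective s) {n : ℕ}
    {b : SquareZeroAlgebra R α} (h : map R s b ∈ filtration R β n) : b ∈ filtration R α n := by
  refine mem_filtration_iff.2 fun w hw => ?_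
  have hsw := mem_filtration_iff.1 h (FreeMonoid.map s w) (by simpa using hw)
  rwa [coeffs_map hs, Finsupp.mapDomain_apply (freeMonoidMap_injective hs)] at hsw

end Map

section LeadingForm

variable {β : Type*} {s : α → β} {f : α → SquareZeroAlgebra R β}

theorem lift_monomial_sub_mem_filtration (hf : ∀ i, f i * f i = 0)
    (hfs : ∀ i, f i - X R (s i) ∈ filtration R β 2) (w : FreeMonoid α) :
    lift f hf (monomial R w) - monomial R (FreeMonoid.map s w) ∈
      filtration R β (w.length + 1) := by
  induction w using FreeMonoid.inductionOn' with
  | one => simp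
  | of_mul i w ih =>
    have hw : lift f hf (monomial R w) ∈ filtration R β w.length := by
      have := add_mem (filtration_antitone (Nat.le_succ _) ih)
        (monomial_mem_filtration (w := FreeMonoid.map s w) (by simp))
      simpa using this
    have htelescope := add_mem (mul_mem_filtration (hfs i) hw)
      (filtration_antitone (by lia) (mul_mem_filtration (X_mem_filtration_one (s i)) ih))
    convert htelescope using 1
    · rw [FreeMonoid.length_mul, FreeMonoid.length_of, add_right_comm]
    · simp only [_root_.map_mul, monomial_of, lift_X, FreeMonoid.map_of]
      rw [sub_mul, mul_sub, sub_add_sub_cancel]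

theorem lift_sub_map_mem_filtration (hf : ∀ i, f i * f i = 0)
    (hfs : ∀ i, f i - X R (s i) ∈ filtration R β 2) {n : ℕ} {b : SquareZeroAlgebra R α}
    (hb : b ∈ filtration R α n) : lift f hf b - map R s b ∈ filtration R β (n + 1) := by
  induction hb using Submodule.span_induction with
  | zero => simp
  | add a b _ _ ha hb =>
    rw [map_add, map_add, add_sub_add_comm]
    exact add_mem ha hb
  | smul r a _ ha => simpa [smul_sub] using Submodule.smul_mem _ r ha
  | mem a ha =>
    obtain ⟨w, hw, rfl⟩ := ha
    rw [map_monomial]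
    exact filtration_antitone (Nat.succ_le_succ hw) (lift_monomial_sub_mem_filtration hf hfs w)

end LeadingForm

end SquareZeroAlgebra

section Shortlex

variable {α β : Type*} [LinearOrder α] [LinearOrder β]

/-- Words compared first by length, then lexicographically. -/
@[reducible] def shortlex (α : Type*) [LinearOrder α] : LinearOrder (FreeMonoid α) :=
  LinearOrder.lift' (fun w => toLex (w.length, w.toList)) fun _ _ h => congrArg Prod.snd h

attribute [local instance] shortlex

theorem shortlex_lt_iff {v w : FreeMonoid α} :
    v < w ↔ v.length < w.length ∨ v.length = w.length ∧ v.toList < w.toList :=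
  Prod.Lex.toLex_lt_toLex

theorem length_le_of_shortlex_le {v w : FreeMonoid α} (h : v ≤ w) : v.length ≤ w.length := by
  contrapose! h
  exact shortlex_lt_iff.2 (.inl h)

theorem shortlex_of_mul_strictMono (i : α) :
    StrictMono fun w : FreeMonoid α => FreeMonoid.of i * w := fun v w h => by
  simpa [shortlex_lt_iff, List.cons_lt_cons_self] using shortlex_lt_iff.1 h

theorem shortlex_map_strictMono {s : α → β} (hs : StrictMono s) :
    StrictMono (FreeMonoid.map s) := fun v w h => by
  simpa [shortlex_lt_iff] using
    (shortlex_lt_iff.1 h).imp_right (And.imp_right (List.map_lt fun _ _ hxy => hs hxy))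

end Shortlex

namespace SquareZeroAlgebra

attribute [local instance] shortlex

variable {R α β : Type*} [CommRing R] [LinearOrder R] [LinearOrder α] [LinearOrder β]

/-- The shortlex-least monomial of `b` has a positive coefficient. -/
def IsPos (b : SquareZeroAlgebra R α) : Prop := 0 < toLex (coeffs R α b)

theorem isPos_iff {b : SquareZeroAlgebra R α} :
    IsPos b ↔ ∃ w, (∀ u < w, coeffs R α b u = 0) ∧ 0 < coeffs R α b w := by
  simp [IsPos, Finsupp.Lex.lt_iff, eq_comm]

theorem not_isPos_zero : ¬ IsPos (0 : SquareZeroAlgebra R α) := by simp [IsPos]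

theorem IsPos.map {s : α → β} (hs : StrictMono s) {b : SquareZeroAlgebra R α} (hb : IsPos b) :
    IsPos (map R s b) := by
  obtain ⟨w, hlt, hw⟩ := isPos_iff.1 hb
  have hinj := freeMonoidMap_injective hs.injective
  refine isPos_iff.2 ⟨FreeMonoid.map s w, fun u hu => ?_, ?_⟩
  · rw [coeffs_map hs.injective]
    by_cases h : u ∈ Set.range (FreeMonoid.map s)
    · obtain ⟨u, rfl⟩ := h
      rw [Finsupp.mapDomain_apply hinj]
      exact hlt u ((shortlex_map_strictMono hs).lt_iff_lt.1 hu)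
    · exact Finsupp.mapDomain_of_notMem_range _ _ h
  · rwa [coeffs_map hs.injective, Finsupp.mapDomain_apply hinj]

theorem IsPos.of_sub_mem_filtration {b c : SquareZeroAlgebra R α} (hb : IsPos b)
    (h : ∀ n, b ∈ filtration R α n → c - b ∈ filtration R α (n + 1)) : IsPos c := by
  obtain ⟨w, hlt, hw⟩ := isPos_iff.1 hb
  have hbw : b ∈ filtration R α w.length :=
    mem_filtration_iff.2 fun u hu => hlt u (shortlex_lt_iff.2 (.inl hu))
  have hcoeffs (u : FreeMonoid α) (hu : u ≤ w) : coeffs R α c u = coeffs R α b u := by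
    rw [← sub_eq_zero, ← Finsupp.sub_apply, ← map_sub]
    exact mem_filtration_iff.1 (h _ hbw) u (Nat.lt_succ_of_le (length_le_of_shortlex_le hu))
  exact isPos_iff.2 ⟨w, fun u hu => (hcoeffs u hu.le).trans (hlt u hu),
    hw.trans_eq (hcoeffs w le_rfl).symm⟩

theorem IsPos.lift {s : α → β} (hs : StrictMono s) {f : α → SquareZeroAlgebra R β}
    (hf : ∀ i, f i * f i = 0) (hfs : ∀ i, f i - X R (s i) ∈ filtration R β 2)
    {b : SquareZeroAlgebra R α} (hb : IsPos b) : IsPos (lift f hf b) :=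
  (hb.map hs).of_sub_mem_filtration fun _ h =>
    lift_sub_map_mem_filtration hf hfs (mem_filtration_of_map_mem hs.injective h)

theorem IsPos.mul_left {a b : SquareZeroAlgebra R α} (ha : a - 1 ∈ filtration R α 1)
    (hb : IsPos b) : IsPos (a * b) :=
  hb.of_sub_mem_filtration fun n h => by
    simpa [sub_mul, add_comm n] using mul_mem_filtration ha h

variable [IsStrictOrderedRing R]

theorem IsPos.add {a b : SquareZeroAlgebra R α} (ha : IsPos a) (hb : IsPos b) :
    IsPos (a + b) := by
  simpa [IsPos] using add_pos ha hb

theorem isPos_or_isPos_neg {b : SquareZeroAlgebra R α} (hb : b ≠ 0) : IsPos b ∨ IsPos (-b) := by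
  have hcoeffs : toLex (coeffs R α b) ≠ 0 := fun h => hb <| by
    simpa [toLex_eq_zero.1 h] using (linearCombination_coeffs b).symm
  simpa [IsPos] using hcoeffs.lt_or_gt.symm

end SquareZeroAlgebra

section PingPong

open Monoid Function
open scoped Pointwise

theorem injective_lift_of_zpow_ping_pong {ι G β : Type*} [Nontrivial ι] [Group G] [MulAction G β]
    (a : ι → G) (S : ι → Set β) (hne : ∀ i, (S i).Nonempty) (hdisj : Pairwise (Disjoint on S))
    (hS : ∀ i j, i ≠ j → ∀ k : ℤ, k ≠ 0 → ∀ b ∈ S j, a i ^ k • b ∈ S i) :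
    Injective (FreeGroup.lift a) := by
  have hlift : FreeGroup.lift a =
      (CoprodI.lift fun i => FreeGroup.lift fun _ : Unit => a i).comp
        (freeGroupEquivCoprodI (ι := ι)).toMonoidHom := by
    ext i
    simp
  rw [hlift, MonoidHom.coe_comp]
  refine Injective.comp ?_ freeGroupEquivCoprodI.injective
  refine CoprodI.lift_injective_of_ping_pong _ (.inr ?_) S hne hdisj fun i j hij g hg => ?_
  · obtain ⟨i⟩ := (inferInstance : Nonempty ι)
    refine ⟨i, ?_⟩
    have : Infinite (FreeGroup Unit) := freeGroupUnitEquivInt.infinite_iff.2 inferInstance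
    exact (Cardinal.natCast_lt_aleph0 (n := 3)).le.trans (Cardinal.aleph0_le_mk _)
  · obtain ⟨k, rfl⟩ := freeGroupUnitEquivInt.symm.surjective g
    have hk : k ≠ 0 := by
      rintro rfl
      exact hg (by simp [freeGroupUnitEquivInt])
    rintro _ ⟨b, hb, rfl⟩
    simpa [freeGroupUnitEquivInt] using hS i j hij k hk b hb

end PingPong

namespace SquareZeroAlgebra

variable {R α : Type*} [CommRing R]

variable (R) in
/-- The unit `1 + Xᵢ`, with inverse `1 - Xᵢ`. -/
def magnusUnit (i : α) : (SquareZeroAlgebra R α)ˣ where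
  val := 1 + X R i
  inv := 1 - X R i
  val_inv := by simp [mul_sub, add_mul]
  inv_val := by simp [mul_add, sub_mul]

variable (R α) in
/-- The Magnus homomorphism `xᵢ ↦ 1 + Xᵢ`. -/
def magnus : FreeGroup α →* (SquareZeroAlgebra R α)ˣ := FreeGroup.lift (magnusUnit R)

@[simp] theorem magnus_of (i : α) : magnus R α (.of i) = magnusUnit R i := lift_apply_of

theorem magnus_sub_one_mem_filtration (g : FreeGroup α) :
    (magnus R α g : SquareZeroAlgebra R α) - 1 ∈ filtration R α 1 := by
  induction g using FreeGroup.induction_on with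
  | C1 => simp
  | of i => simpa [magnusUnit] using X_mem_filtration_one i
  | inv_of i _ => simpa [magnusUnit] using X_mem_filtration_one i
  | mul g h hg hh =>
    have key := add_mem (mul_mem_filtration (mem_filtration_zero (magnus R α g).1) hh) hg
    simpa [mul_sub] using key

theorem magnusUnit_zpow (i : α) (k : ℤ) :
    ((magnusUnit R i ^ k : (SquareZeroAlgebra R α)ˣ) : SquareZeroAlgebra R α) =
      1 + (k : R) • X R i := by
  induction k with
  | zero => simp
  | succ k ih =>
    rw [zpow_add_one, Units.val_mul, ih]
    simp [magnusUnit, add_mul, mul_add, add_smul, add_assoc, add_comm (X R i)]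
  | pred k ih =>
    rw [zpow_sub_one, Units.val_mul, ih]
    simp [magnusUnit, add_mul, mul_add, sub_eq_add_neg, add_smul, add_assoc]

section Injective

variable [LinearOrder α]

attribute [local instance] shortlex

variable (R) in
/-- The elements whose shortlex-greatest monomial starts with `Xᵢ`: the ping-pong table for
`magnus`. -/
def leadingLetter (i : α) : Set (SquareZeroAlgebra R α) :=
  {b | ∃ w, IsGreatest {u | coeffs R α b u ≠ 0} (.of i * w)}

theorem X_mem_leadingLetter [Nontrivial R] (i : α) : X R i ∈ leadingLetter R i := by
  classical
  have hdvd : ¬ FreeMonoid.of i ∣ 1 := fun ⟨_, hc⟩ => List.cons_ne_nil _ _ hc.symm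
  have hX : coeffs R α (X R i) = .single (.of i) 1 := by
    simpa [mulLeftX_single_of_not_dvd hdvd] using coeffs_X_mul (R := R) i 1
  refine ⟨1, by simp [hX], fun u hu => ?_⟩
  obtain ⟨rfl, -⟩ := Finsupp.single_apply_ne_zero.1 (hX ▸ hu)
  rw [mul_one]

theorem pairwise_disjoint_leadingLetter :
    Pairwise (Function.onFun Disjoint (leadingLetter R (α := α))) := fun _ _ hij =>
  Set.disjoint_left.2 fun _ ⟨_, hv⟩ ⟨_, hw⟩ => hij (List.cons.inj (hv.unique hw)).1

theorem magnusUnit_zpow_smul_mem_leadingLetter [IsDomain R] [CharZero R] {i j : α} (hij : i ≠ j)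
    {k : ℤ} (hk : k ≠ 0) {b : SquareZeroAlgebra R α} (hb : b ∈ leadingLetter R j) :
    magnusUnit R i ^ k • b ∈ leadingLetter R i := by
  obtain ⟨w, hw, hmax⟩ := hb
  have hcoeffs (u : FreeMonoid α) : coeffs R α (magnusUnit R i ^ k • b) u =
      coeffs R α b u + k * mulLeftX R i (coeffs R α b) u := by
    simp [Units.smul_def, magnusUnit_zpow, add_mul]
  have hlt (v : FreeMonoid α) : v < .of i * v :=
    shortlex_lt_iff.2 (.inl (by simp))
  refine ⟨.of j * w, ?_, fun u hu => ?_⟩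
  · have hb : coeffs R α b (.of i * (.of j * w)) = 0 := by
      by_contra h
      exact (hlt _).not_ge (hmax h)
    have hndvd : ¬ FreeMonoid.of i ∣ .of j * w := fun ⟨c, hc⟩ => hij (List.cons.inj hc).1.symm
    simpa [hcoeffs, hb, mulLeftX_apply_of_mul i _ hndvd, hk] using hw
  · by_cases h : coeffs R α b u = 0
    · have hu' : mulLeftX R i (coeffs R α b) u ≠ 0 := fun h' => hu (by simp [hcoeffs, h, h'])
      obtain ⟨v, rfl, hv⟩ := exists_of_mulLeftX_apply_ne_zero hu'
      exact (shortlex_of_mul_strictMono i).monotone (hmax hv)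
    · exact (hmax h).trans (hlt _).le

theorem magnus_injective [Nontrivial α] [IsDomain R] [CharZero R] :
    Function.Injective (magnus R α) :=
  injective_lift_of_zpow_ping_pong _ (leadingLetter R) (fun i => ⟨_, X_mem_leadingLetter i⟩)
    pairwise_disjoint_leadingLetter fun _ _ hij _ hk _ hb =>
      magnusUnit_zpow_smul_mem_leadingLetter hij hk hb

end Injective

section Conj

theorem conj_X_mul_self (u : (SquareZeroAlgebra R α)ˣ) (i : α) :
    (u * X R i * ↑u⁻¹) * (u * X R i * ↑u⁻¹) = 0 := by
  simp [mul_assoc, ← mul_assoc (X R i) (X R i)]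

theorem magnus_conj_X_sub_X_mem_filtration (g : FreeGroup α) (i : α) :
    magnus R α g * X R i * ↑(magnus R α g)⁻¹ - X R i ∈ filtration R α 2 := by
  have hX := X_mem_filtration_one (R := R) i
  have hleft : (magnus R α g - 1) * X R i * ↑(magnus R α g)⁻¹ ∈ filtration R α 2 := by
    simpa using mul_mem_filtration (mul_mem_filtration (magnus_sub_one_mem_filtration g) hX)
      (mem_filtration_zero (magnus R α g⁻¹).1)
  have hright : X R i * (↑(magnus R α g)⁻¹ - 1) ∈ filtration R α 2 := by
    simpa using mul_mem_filtration hX (magnus_sub_one_mem_filtration g⁻¹)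
  simpa [sub_mul, mul_sub] using add_mem hleft hright

variable {β : Type*} {ψ : FreeGroup α →* FreeGroup β} {s : α → β} {v : α → FreeGroup β}

theorem lift_magnus (hψ : ∀ i, ψ (.of i) = v i * .of (s i) * (v i)⁻¹) (g : FreeGroup α) :
    lift (fun i => magnus R β (v i) * X R (s i) * ↑(magnus R β (v i))⁻¹)
      (fun _ => conj_X_mul_self _ _) (magnus R α g : SquareZeroAlgebra R α) =
      magnus R β (ψ g) := by
  let Φ : SquareZeroAlgebra R α →ₐ[R] SquareZeroAlgebra R β :=
    lift (fun i => magnus R β (v i) * X R (s i) * ↑(magnus R β (v i))⁻¹)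
      fun _ => conj_X_mul_self _ _
  suffices (Units.map (Φ : SquareZeroAlgebra R α →* SquareZeroAlgebra R β)).comp (magnus R α) =
      (magnus R β).comp ψ from congrArg Units.val (DFunLike.congr_fun this g)
  ext i
  simp [Φ, magnusUnit, hψ, mul_add, add_mul]

end Conj

section Cone

variable [LinearOrder R] [LinearOrder α]

variable (R α) in
/-- The positive cone of the Magnus ordering. -/
def magnusCone : Set (FreeGroup α) := {g | IsPos ((magnus R α g : SquareZeroAlgebra R α) - 1)}

theorem mapsTo_magnusCone {β : Type*} [LinearOrder β] {ψ : FreeGroup α →* FreeGroup β}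
    {s : α → β} (hs : StrictMono s) {v : α → FreeGroup β}
    (hψ : ∀ i, ψ (.of i) = v i * .of (s i) * (v i)⁻¹) :
    Set.MapsTo ψ (magnusCone R α) (magnusCone R β) := fun g hg => by
  have hpos := hg.lift hs (fun _ => conj_X_mul_self _ _)
    fun i => magnus_conj_X_sub_X_mem_filtration (v i) (s i)
  rwa [map_sub, _root_.map_one, lift_magnus hψ] at hpos

theorem isPositiveCone_magnusCone [IsStrictOrderedRing R] [Nontrivial α] :
    IsPositiveCone (magnusCone R α) where
  one_notMem := by simpa [magnusCone] using not_isPos_zero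
  mul_mem {g h} hg hh := by
    have := (hh.mul_left (magnus_sub_one_mem_filtration g)).add hg
    simpa [magnusCone, mul_sub] using this
  conj_mem g ha := mapsTo_magnusCone (ψ := (MulAut.conj g).toMonoidHom) (v := fun _ => g)
    strictMono_id (fun _ => rfl) ha
  mem_or_inv_mem {g} hg := by
    have hne : (magnus R α g : SquareZeroAlgebra R α) - 1 ≠ 0 := by
      simpa [sub_eq_zero] using (map_ne_one_iff _ magnus_injective).2 hg
    refine (isPos_or_isPos_neg hne).imp_right fun h => ?_
    simpa [magnusCone, mul_sub] using h.mul_left (magnus_sub_one_mem_filtration g⁻¹)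

end Cone

end SquareZeroAlgebra

section Kernel

open Multiplicative SquareZeroAlgebra

variable {n : ℕ}

variable (n) in
/-- The exponent sum of `x₀` in a word in `x₀, …, xₙ`. -/
def exponentZero : FreeGroup (Fin (n + 1)) →* Multiplicative ℤ :=
  FreeGroup.lift (Fin.cases (ofAdd 1) fun _ => 1)

variable (n) in
/-- The homomorphism `(k, j) ↦ x₀⁻ᵏ xⱼ₊₁ x₀ᵏ`, which identifies the kernel of `exponentZero n` with
a free group. -/
def kerEmbedding : FreeGroup (ℤ ×ₗ Fin n) →* FreeGroup (Fin (n + 1)) :=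
  FreeGroup.lift fun p => of 0 ^ (-(ofLex p).1) * of (ofLex p).2.succ * of 0 ^ (ofLex p).1

@[simp] theorem exponentZero_of_zero_zpow (k : ℤ) : exponentZero n (of 0 ^ k) = ofAdd k := by
  simp [exponentZero, ← ofAdd_zsmul]

/-- The translation of the first coordinate by `-k`. -/
def shift (k : ℤ) (p : ℤ ×ₗ Fin n) : ℤ ×ₗ Fin n := toLex ((ofLex p).1 - k, (ofLex p).2)

theorem shift_strictMono (k : ℤ) : StrictMono (shift (n := n) k) := fun p q h => by
  simpa [shift, Prod.Lex.toLex_lt_toLex] using Prod.Lex.lt_iff.1 h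

variable (n) in
/-- The action of `ℤ` on `FreeGroup (ℤ ×ₗ Fin n)` by translations, corresponding under
`kerEmbedding n` to conjugation by the powers of `x₀`. -/
def shiftAut : Multiplicative ℤ →* MulAut (FreeGroup (ℤ ×ₗ Fin n)) where
  toFun k := freeGroupCongr
    { toFun := shift k.toAdd
      invFun := shift (-k.toAdd)
      left_inv p := by simp [shift]
      right_inv p := by simp [shift] }
  map_one' := MulEquiv.toMonoidHom_injective <| by
    ext p
    simp [shift]
  map_mul' k l := MulEquiv.toMonoidHom_injective <| by
    ext p
    simp [shift, sub_sub, add_comm]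

@[simp] theorem shiftAut_of (k : ℤ) (p : ℤ ×ₗ Fin n) :
    shiftAut n (ofAdd k) (of p) = of (shift k p) := by simp [shiftAut]

theorem kerEmbedding_shiftAut (k : ℤ) (m : FreeGroup (ℤ ×ₗ Fin n)) :
    kerEmbedding n (shiftAut n (ofAdd k) m) = of 0 ^ k * kerEmbedding n m * (of 0 ^ k)⁻¹ := by
  suffices (kerEmbedding n).comp (shiftAut n (ofAdd k)).toMonoidHom =
      (MulAut.conj (of 0 ^ k)).toMonoidHom.comp (kerEmbedding n) from DFunLike.congr_fun this m
  ext p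
  rw [MonoidHom.comp_apply, MonoidHom.comp_apply, MulEquiv.coe_toMonoidHom,
    MulEquiv.coe_toMonoidHom, MulAut.conj_apply]
  simp [kerEmbedding, shift, zpow_sub, mul_assoc]

variable (n) in
/-- `x₀` goes to the generator of `ℤ` and `xⱼ₊₁` to the generator `(0, j)`. -/
def toSemidirect : FreeGroup (Fin (n + 1)) →*
    FreeGroup (ℤ ×ₗ Fin n) ⋊[shiftAut n] Multiplicative ℤ :=
  FreeGroup.lift (Fin.cases (.inr (ofAdd 1)) fun j => .inl (of (toLex (0, j))))

variable (n) in
/-- The inverse of `toSemidirect n`. -/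
def ofSemidirect : FreeGroup (ℤ ×ₗ Fin n) ⋊[shiftAut n] Multiplicative ℤ →*
    FreeGroup (Fin (n + 1)) :=
  SemidirectProduct.lift (kerEmbedding n) (zpowersHom _ (of 0)) fun k => by
    ext p
    exact kerEmbedding_shiftAut k.toAdd (of p)

theorem toSemidirect_kerEmbedding (m : FreeGroup (ℤ ×ₗ Fin n)) :
    toSemidirect n (kerEmbedding n m) = .inl m := by
  suffices (toSemidirect n).comp (kerEmbedding n) = SemidirectProduct.inl from
    DFunLike.congr_fun this m
  ext1 p
  have hzero : toSemidirect n (of 0) = .inr (ofAdd 1) := by simp [toSemidirect]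
  have hzpow (k : ℤ) : toSemidirect n (of 0 ^ k) = .inr (ofAdd k) := by
    rw [map_zpow, hzero, ← map_zpow, ← ofAdd_zsmul, smul_eq_mul, mul_one]
  have hsucc (j : Fin n) : toSemidirect n (of j.succ) = .inl (of (toLex (0, j))) := by
    simp [toSemidirect]
  have hconj := SemidirectProduct.inl_aut (φ := shiftAut n) (ofAdd (-(ofLex p).1))
    (of (toLex (0, (ofLex p).2)))
  simp only [kerEmbedding, MonoidHom.comp_apply, lift_apply_of, _root_.map_mul, hzpow, hsucc]
  simpa [shift, ← ofAdd_neg] using hconj.symm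

theorem ofSemidirect_toSemidirect (g : FreeGroup (Fin (n + 1))) :
    ofSemidirect n (toSemidirect n g) = g := by
  suffices (ofSemidirect n).comp (toSemidirect n) = .id _ from DFunLike.congr_fun this g
  ext i
  cases i using Fin.cases <;> simp [toSemidirect, ofSemidirect, kerEmbedding]

theorem toSemidirect_right (g : FreeGroup (Fin (n + 1))) :
    (toSemidirect n g).right = exponentZero n g := by
  suffices SemidirectProduct.rightHom.comp (toSemidirect n) = exponentZero n from
    DFunLike.congr_fun this g
  ext i
  cases i using Fin.cases <;> simp [toSemidirect, exponentZero]

theorem kerEmbedding_injective : Function.Injective (kerEmbedding n) := fun a b h =>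
  SemidirectProduct.inl_injective (φ := shiftAut n) <| by
    rw [← toSemidirect_kerEmbedding, h, toSemidirect_kerEmbedding]

theorem range_kerEmbedding : (kerEmbedding n).range = (exponentZero n).ker := by
  ext g
  refine ⟨?_, fun hg => ?_⟩
  · rintro ⟨m, rfl⟩
    rw [MonoidHom.mem_ker, ← toSemidirect_right, toSemidirect_kerEmbedding,
      SemidirectProduct.right_inl]
  · obtain ⟨m, hm⟩ : toSemidirect n g ∈ (SemidirectProduct.inl).range := by
      rw [SemidirectProduct.range_inl_eq_ker_rightHom]
      exact (toSemidirect_right g).trans hg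
    refine ⟨m, ?_⟩
    rw [← ofSemidirect_toSemidirect g, ← hm]
    simp [ofSemidirect]

theorem exists_eq_kerEmbedding_mul_zpow (g : FreeGroup (Fin (n + 1))) :
    ∃ m, g = kerEmbedding n m * of 0 ^ (exponentZero n g).toAdd := by
  obtain ⟨m, hm⟩ : g * (of 0 ^ (exponentZero n g).toAdd)⁻¹ ∈ (kerEmbedding n).range := by
    rw [range_kerEmbedding, MonoidHom.mem_ker, _root_.map_mul, _root_.map_inv,
      exponentZero_of_zero_zpow, ofAdd_toAdd, mul_inv_cancel]
  exact ⟨m, by rw [hm, inv_mul_cancel_right]⟩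

variable (n) in
/-- The elements of positive exponent sum in `x₀`, and those of exponent sum zero that are positive
in the Magnus ordering of the kernel. -/
def exponentCone : Set (FreeGroup (Fin (n + 1))) :=
  exponentZero n ⁻¹' {a | 1 < a} ∪ kerEmbedding n '' magnusCone ℤ (ℤ ×ₗ Fin n)

theorem mapsTo_image_magnusCone {χ : FreeGroup (Fin (n + 1)) →* FreeGroup (Fin (n + 1))}
    {s : ℤ ×ₗ Fin n → ℤ ×ₗ Fin n} (hs : StrictMono s) {v : ℤ ×ₗ Fin n → FreeGroup (ℤ ×ₗ Fin n)}
    (hχ : ∀ p, χ (kerEmbedding n (of p)) = kerEmbedding n (v p * of (s p) * (v p)⁻¹)) :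
    Set.MapsTo χ (kerEmbedding n '' magnusCone ℤ (ℤ ×ₗ Fin n))
      (kerEmbedding n '' magnusCone ℤ (ℤ ×ₗ Fin n)) := by
  rintro _ ⟨m, hm, rfl⟩
  let ψ : FreeGroup (ℤ ×ₗ Fin n) →* FreeGroup (ℤ ×ₗ Fin n) :=
    FreeGroup.lift fun p => v p * of (s p) * (v p)⁻¹
  have hψ : χ.comp (kerEmbedding n) = (kerEmbedding n).comp ψ := by
    ext p
    simpa [ψ] using hχ p
  exact ⟨ψ m, mapsTo_magnusCone hs (v := v) (fun p => by simp [ψ]) hm,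
    (DFunLike.congr_fun hψ m).symm⟩

theorem isPositiveCone_exponentCone [NeZero n] : IsPositiveCone (exponentCone n) := by
  refine isPositiveCone_magnusCone.extension .setOf_one_lt kerEmbedding_injective
    range_kerEmbedding fun g m hm => ?_
  obtain ⟨u, hu⟩ := exists_eq_kerEmbedding_mul_zpow g
  refine mapsTo_image_magnusCone (χ := (MulAut.conj g).toMonoidHom)
    (shift_strictMono (exponentZero n g).toAdd) (v := fun _ => u) (fun p => ?_) ⟨m, hm, rfl⟩
  rw [_root_.map_mul, _root_.map_mul, ← shiftAut_of, kerEmbedding_shiftAut]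
  simp only [MulEquiv.coe_toMonoidHom, MulAut.conj_apply]
  generalize (exponentZero n g).toAdd = k at *
  subst hu
  simp [mul_assoc]

theorem mapsTo_exponentCone {φ : FreeGroup (Fin (n + 1)) →* FreeGroup (Fin (n + 1))}
    (hφ : (exponentZero n).comp φ = exponentZero n)
    {v : Fin n → FreeGroup (ℤ ×ₗ Fin n)} {c : Fin n → ℤ} {σ : Fin n → Fin n}
    (hφ_succ : ∀ j, φ (of j.succ) = kerEmbedding n (v j * of (toLex (c j, σ j)) * (v j)⁻¹))
    (hs : StrictMono fun p : ℤ ×ₗ Fin n =>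
      toLex ((ofLex p).1 + c (ofLex p).2, σ (ofLex p).2)) :
    Set.MapsTo φ (exponentCone n) (exponentCone n) := by
  have hexp (g : FreeGroup (Fin (n + 1))) : exponentZero n (φ g) = exponentZero n g :=
    DFunLike.congr_fun hφ g
  have hzpow (k : ℤ) : ∃ u, φ (of 0 ^ (-k)) = kerEmbedding n u * of 0 ^ (-k) := by
    obtain ⟨u, hu⟩ := exists_eq_kerEmbedding_mul_zpow (φ (of 0 ^ (-k)))
    refine ⟨u, hu.trans ?_⟩
    rw [hexp, exponentZero_of_zero_zpow, toAdd_ofAdd]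
  choose u hu using hzpow
  refine Set.MapsTo.union_union (fun g hg => ?_) (mapsTo_image_magnusCone hs
    (v := fun p => u (ofLex p).1 * shiftAut n (ofAdd (-(ofLex p).1)) (v (ofLex p).2)) fun p => ?_)
  · rwa [Set.mem_preimage, hexp]
  · have hof : kerEmbedding n (of p) =
        of 0 ^ (-(ofLex p).1) * of (ofLex p).2.succ * (of 0 ^ (-(ofLex p).1))⁻¹ := by
      simp [kerEmbedding]
    have hshift : of (toLex ((ofLex p).1 + c (ofLex p).2, σ (ofLex p).2)) =
        shiftAut n (ofAdd (-(ofLex p).1)) (of (toLex (c (ofLex p).2, σ (ofLex p).2))) := by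
      simp only [shiftAut_of, shift, ofLex_toLex, sub_neg_eq_add, add_comm]
    rw [hof, hshift, _root_.map_mul, _root_.map_mul, _root_.map_inv, hu, hφ_succ]
    simp only [_root_.map_mul, _root_.map_inv, kerEmbedding_shiftAut, mul_inv_rev, mul_assoc,
      inv_mul_cancel_left, inv_inv]

theorem mapsTo_phiMagic : Set.MapsTo phiMagic (exponentCone 2) (exponentCone 2) := by
  have hexp : (exponentZero 2).comp phiMagic = exponentZero 2 := by
    ext i
    fin_cases i <;> simp [phiMagic, exponentZero] <;> rfl
  have hpred : StrictMono fun p : ℤ ×ₗ Fin 2 =>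
      toLex ((ofLex p).1 + (![-1, 0] : Fin 2 → ℤ) (ofLex p).2,
        (![1, 0] : Fin 2 → Fin 2) (ofLex p).2) := by
    intro p q h
    obtain ⟨⟨k, i⟩, rfl⟩ := toLex.surjective p
    obtain ⟨⟨l, j⟩, rfl⟩ := toLex.surjective q
    fin_cases i <;> fin_cases j <;> simp [Prod.Lex.toLex_lt_toLex] at h ⊢ <;> omega
  refine mapsTo_exponentCone (v := ![1, (of (toLex (0, 1)))⁻¹]) (c := ![-1, 0]) (σ := ![1, 0])
    hexp (fun j => ?_) hpred
  fin_cases j <;> simp [phiMagic, kerEmbedding]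

end Kernel

/-- There is a bi-ordering of `F₃` invariant under the automorphism induced by the
braid `σ₁²σ₂⁻¹` (whose complement link is the magic manifold). -/
theorem stmt11 :
    ∃ lt : FreeGroup (Fin 3) → FreeGroup (Fin 3) → Prop,
      (∀ a, ¬ lt a a) ∧
      (∀ a b c, lt a b → lt b c → lt a c) ∧
      (∀ a b, a ≠ b → lt a b ∨ lt b a) ∧
      (∀ a b c, lt a b → lt (c * a) (c * b)) ∧
      (∀ a b c, lt a b → lt (a * c) (b * c)) ∧
      (∀ a b, lt a b ↔ lt (phiMagic a) (phiMagic b)) :=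
  isPositiveCone_exponentCone.exists_invariant_biOrder mapsTo_phiMagic
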